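/- arXiv:2311.03256 — 2 statements merged into one kernel-verified Lean document; each statement's English description precedes it below -/
import Mathlib

section
/- Let N be a natural number, p1, p2, p3 reals with 0 < p1, p2, p3 < 1, and λ a real number. Then for all natural numbers i, j with i + j ≤ N and all integers x, y with 0 ≤ x, 0 ≤ y and x + y ≤ N, the λ-Griffiths polynomials satisfy the difference relation −j·G^λ_{i,j}(x,y) = −(x+1)·p2(1−p3)·G^λ_{i,j}(x+1,y) − (N−x−y+1)·p2 p3·G^λ_{i,j}(x−1,y) + (y+1)·(1−p2)·G^λ_{i,j}(x,y+1) + (N−x−y+1)·p2(1−p3)·G^λ_{i,j}(x,y−1) + (x+1)·p2(1−p3)·G^λ_{i,j}(x+1,y−1) + (y+1)·(1−p2)·(p3/(1−p3))·G^λ_{i,j}(x−1,y+1) − [ x·p3 p2 + y·(1−p2) + (N−x−y)·p2(1−p3) ]·G^λ_{i,j}(x,y), where arguments with y < 0 or y > N give the value 0 by the defining convention. -/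
/-!
For `n ≤ N` the Krawtchouk polynomials have the generating function
`∑ₓ kₙ(x; p, N) zˣ = (1 - z)ⁿ (1 + r z)^(N - n)` with `r = p / (1 - p)` (`kraw_eq_zcoeff`).
Differentiating it gives, with `K` in the role of the size parameter, three relations besides the
obvious size recurrence `kₙ(x; K) + r kₙ(x - 1; K) = kₙ(x; K + 1)`: the difference equation in `x`
(`kraw_diff`), the lowering relation from size `K + 1` to `K` (`kraw_lower`), and a contiguous
three-term relation with eigenvalue `K - n` (`kraw_three_term`).

The claimed relation holds separately for each index `a` of the sum defining `G^λ_{i,j}`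
(`gTerm_relation`). Grouping its right-hand side according to the second argument `y`, `y + 1`,
`y - 1`, each group of Krawtchouk polynomials in `x` collapses to a multiple of `k_a(x; p3, N - y)`,
and what is left is the difference equation of `k_j(y; p2, N - a)`, whose eigenvalue is `-j`.
-/

/-- The (renormalized) Krawtchouk polynomial `k_n(x; p, N)`.
For `x ≥ 0` it equals `(p/(1-p))^x * C(N,x) * ₂F₁(-n,-x;-N;1/p)` written as a finite sum,
and it is `0` for `x < 0`. -/
noncomputable def kraw (p : ℝ) (N n : ℕ) (x : ℤ) : ℝ :=
  if x < 0 then 0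
  else (p / (1 - p)) ^ x * (N.choose x.toNat : ℝ) *
    ∑ m ∈ Finset.range (min n x.toNat + 1),
      (-1 : ℝ) ^ m * (n.choose m : ℝ) * (x.toNat.choose m : ℝ) * (m.factorial : ℝ) *
        ((N - m).factorial / (N.factorial : ℝ)) * p ^ (-(m : ℤ))

/-- The `λ`-Griffiths polynomial `G^λ_{i,j}(x,y; p1,p2,p3; N)`. -/
noncomputable def griffiths (lam p1 p2 p3 : ℝ) (N i j : ℕ) (x y : ℤ) : ℝ :=
  if y < 0 ∨ (N : ℤ) < y then 0
  else ∑ a ∈ Finset.range (N - j + 1),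
    lam ^ a * kraw p1 (N - j) i (a : ℤ) * kraw p2 (N - a) j y * kraw p3 (N - y.toNat) a x

open Polynomial

/-! ### Coefficients with integer index -/

/-- Coefficient extraction with an integer index; it vanishes at negative indices. -/
noncomputable def zcoeff (x : ℤ) : ℝ[X] →ₗ[ℝ] ℝ :=
  if x < 0 then 0 else lcoeff ℝ x.toNat

/-- The generating function `(1 - z)ⁿ (1 + r z)ᵐ` of the Krawtchouk polynomials of degree `n` and
size `n + m`, where `r = p / (1 - p)`. -/
noncomputable def gen (r : ℝ) (n m : ℕ) : ℝ[X] := (1 - X) ^ n * (1 + C r * X) ^ m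

lemma zcoeff_X_mul (x : ℤ) (P : ℝ[X]) : zcoeff x (X * P) = zcoeff (x - 1) P := by
  unfold zcoeff
  rcases lt_trichotomy x 0 with h | rfl | h
  · simp [h, show x - 1 < 0 by lia]
  · simp
  · obtain ⟨k, rfl⟩ : ∃ k : ℕ, x = k + 1 := ⟨(x - 1).toNat, by lia⟩
    have h1 : ((k : ℤ) + 1).toNat = k + 1 := by lia
    have h2 : ¬ ((k : ℤ) + 1 < 0) := by lia
    have h3 : ¬ ((k : ℤ) < 0) := by lia
    simp [h1, h2, h3, coeff_X_mul]

lemma zcoeff_derivative (x : ℤ) (P : ℝ[X]) :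
    zcoeff x (derivative P) = (x + 1) * zcoeff (x + 1) P := by
  unfold zcoeff
  rcases lt_or_ge x 0 with h | h
  · rcases eq_or_ne x (-1) with rfl | h'
    · simp
    · simp [h, show x + 1 < 0 by lia]
  · lift x to ℕ using h
    have h1 : ((x : ℤ) + 1).toNat = x + 1 := by lia
    have h2 : ¬ ((x : ℤ) + 1 < 0) := by lia
    have h3 : ¬ ((x : ℤ) < 0) := by lia
    simp [h1, h2, h3, coeff_derivative, mul_comm]

lemma zcoeff_C_mul (x : ℤ) (c : ℝ) (P : ℝ[X]) : zcoeff x (C c * P) = c * zcoeff x P := by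
  rw [C_mul', map_smul, smul_eq_mul]

lemma zcoeff_X_mul_derivative (x : ℤ) (P : ℝ[X]) :
    zcoeff x (X * derivative P) = x * zcoeff x P := by
  rw [zcoeff_X_mul, zcoeff_derivative]
  push_cast
  simp

/-! ### The generating function and its derivative -/

lemma mul_derivative_pow (L : ℝ[X]) (n : ℕ) :
    L * derivative (L ^ n) = C (n : ℝ) * derivative L * L ^ n := by
  cases n with
  | zero => simp
  | succ n => rw [derivative_pow_succ]; push_cast; simp only [map_add, map_one]; ring

lemma gen_derivative (r : ℝ) (n m : ℕ) :
    (1 - X) * (1 + C r * X) * derivative (gen r n m) =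
      (-C (n : ℝ) * (1 + C r * X) + C (m : ℝ) * C r * (1 - X)) * gen r n m := by
  have h1 := mul_derivative_pow (1 - X) n
  have h2 := mul_derivative_pow (1 + C r * X) m
  have d1 : derivative (1 - X : ℝ[X]) = -1 := by simp
  have d2 : derivative (1 + C r * X : ℝ[X]) = C r := by simp
  rw [d1] at h1
  rw [d2] at h2
  unfold gen
  rw [derivative_mul]
  linear_combination (1 + C r * X) ^ m * (1 + C r * X) * h1 + (1 - X) ^ n * (1 - X) * h2

lemma gen_derivative_succ (r : ℝ) (n m : ℕ) :
    (1 - X) * derivative (gen r n (m + 1)) =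
      -C (n : ℝ) * gen r n (m + 1) + C ((m : ℝ) + 1) * C r * (1 - X) * gen r n m := by
  have h1 := mul_derivative_pow (1 - X) n
  have d1 : derivative (1 - X : ℝ[X]) = -1 := by simp
  have d2 : derivative (1 + C r * X : ℝ[X]) = C r := by simp
  rw [d1] at h1
  unfold gen
  rw [derivative_mul, derivative_pow_succ, d2]
  linear_combination (1 + C r * X) ^ (m + 1) * h1

/-- The generating function is read off by expanding
`(1 - z)ⁿ = ((1 + r z) - (1 + r) z)ⁿ` and using `(1 + r) / r = 1 / p`. -/
lemma kraw_eq_zcoeff {p : ℝ} (hp : 0 < p) (hp' : p < 1) {N n : ℕ} (h : n ≤ N) (x : ℤ) :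
    kraw p N n x = zcoeff x (gen (p / (1 - p)) n (N - n)) := by
  unfold kraw zcoeff
  split_ifs with hx
  · simp
  push Not at hx
  lift x to ℕ using hx
  have hq : 0 < 1 - p := by linarith
  set r := p / (1 - p) with hr
  have hr0 : r ≠ 0 := (div_pos hp hq).ne'
  have hr1 : 1 + r = r * p⁻¹ := by rw [hr]; field_simp; ring
  have hgen : gen r n (N - n) = ∑ m ∈ Finset.range (n + 1),
      C ((-(1 + r)) ^ m * (n.choose m : ℝ)) * (X ^ m * (1 + C r * X) ^ (N - m)) := by
    unfold gen
    have e : (1 - X : ℝ[X]) = C (-(1 + r)) * X + (1 + C r * X) := by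
      simp only [map_neg, map_add, map_one]; ring
    rw [e, add_pow, Finset.sum_mul]
    refine Finset.sum_congr rfl fun m hm => ?_
    have hm' : m ≤ n := by simpa [Nat.lt_succ_iff] using hm
    rw [show N - m = (n - m) + (N - n) by lia, pow_add, mul_pow, C_mul, C_pow]
    simp only [map_natCast]
    ring
  have hbin (M k : ℕ) : ((1 + C r * X : ℝ[X]) ^ M).coeff k = r ^ k * M.choose k := by
    have := coeff_one_add_X_pow ℝ M k
    have e : (1 + C r * X : ℝ[X]) ^ M = ((1 + X) ^ M : ℝ[X]).comp (C r * X) := by simp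
    rw [e, comp_C_mul_X_coeff, this, mul_comm]
  rw [hgen]
  simp only [Int.toNat_natCast, lcoeff_apply, finsetSum_coeff, coeff_C_mul, coeff_X_pow_mul', hbin,
    zpow_natCast, Finset.mul_sum]
  have hsub : Finset.range (min n x + 1) ⊆ Finset.range (n + 1) := by
    intro m; simp only [Finset.mem_range]; lia
  rw [← Finset.sum_subset hsub]
  · refine Finset.sum_congr rfl fun m hm => ?_
    have hm' : m ≤ n ∧ m ≤ x := by simp only [Finset.mem_range] at hm; lia
    rw [if_pos hm'.2]
    have key : (N.choose x : ℝ) * x.choose m * m.factorial * (N - m).factorial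
        = (N - m).choose (x - m) * N.factorial := by
      rcases le_or_gt x N with hxN | hxN
      · have e1 := Nat.choose_mul (n := N) (k := x) (s := m) hm'.2
        have e2 := Nat.choose_mul_factorial_mul_factorial (hm'.1.trans h)
        have e1' : (N.choose x : ℝ) * x.choose m = N.choose m * (N - m).choose (x - m) := by
          exact_mod_cast e1
        have e2' : (N.choose m : ℝ) * m.factorial * (N - m).factorial = N.factorial := by
          exact_mod_cast e2
        rw [e1', ← e2']; ring
      · rw [Nat.choose_eq_zero_of_lt hxN,
          Nat.choose_eq_zero_of_lt (show N - m < x - m by lia)]; simp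
    have hN : (N.factorial : ℝ) ≠ 0 := by positivity
    have hrx : r ^ x = r ^ m * r ^ (x - m) := by rw [← pow_add]; congr 1; lia
    rw [neg_pow (1 + r), hr1, mul_pow, inv_pow, zpow_neg, zpow_natCast, hrx]
    have key' : ((N - m).choose (x - m) : ℝ) =
        (N.choose x : ℝ) * x.choose m * m.factorial * ((N - m).factorial / N.factorial) := by
      field_simp
      linear_combination -key
    rw [key']
    ring
  · intro m hm hm'
    have : ¬ m ≤ x := by simp only [Finset.mem_range] at hm hm'; lia
    simp [this]

lemma kraw_of_gt (p : ℝ) {N : ℕ} (n : ℕ) {x : ℤ} (h : (N : ℤ) < x) : kraw p N n x = 0 := by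
  unfold kraw
  rw [if_neg (by lia), Nat.choose_eq_zero_of_lt (show N < x.toNat by lia)]
  simp

lemma kraw_of_neg (p : ℝ) (N n : ℕ) {x : ℤ} (h : x < 0) : kraw p N n x = 0 := by
  simp [kraw, h]

/-! ### Relations between Krawtchouk polynomials -/

lemma gen_size_succ (r : ℝ) (n m : ℕ) :
    gen r n m + C r * (X * gen r n m) = gen r n (m + 1) := by
  unfold gen; ring

/-- The recurrence in the size parameter, from multiplication by `1 + r z`. -/
lemma kraw_size_succ {p : ℝ} (hp : 0 < p) (hp' : p < 1) {K n : ℕ} (h : n ≤ K) (x : ℤ) :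
    kraw p K n x + p / (1 - p) * kraw p K n (x - 1) = kraw p (K + 1) n x := by
  rw [kraw_eq_zcoeff hp hp' h, kraw_eq_zcoeff hp hp' h,
    kraw_eq_zcoeff hp hp' (show n ≤ K + 1 by lia), show K + 1 - n = K - n + 1 by lia,
    ← gen_size_succ, map_add, zcoeff_C_mul, zcoeff_X_mul]

/-- The difference equation of the Krawtchouk polynomials, with eigenvalue `-n`. -/
lemma kraw_diff {p : ℝ} (hp : 0 < p) (hp' : p < 1) {K n : ℕ} (h : n ≤ K) (x : ℤ) :
    ((x : ℝ) + 1) * (1 - p) * kraw p K n (x + 1) + ((K : ℝ) - x + 1) * p * kraw p K n (x - 1)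
      - (x * (1 - p) + (K - x) * p) * kraw p K n x = -(n : ℝ) * kraw p K n x := by
  obtain ⟨m, rfl⟩ := Nat.exists_eq_add_of_le h
  simp only [kraw_eq_zcoeff hp hp' h, Nat.add_sub_cancel_left]
  set r := p / (1 - p) with hr
  have hqr : C p = C (1 - p) * C r := by
    rw [← C_mul, hr]; congr 1; field_simp [show (1 - p) ≠ 0 by linarith]
  have hpq : C (1 - p) = 1 - C p := by simp
  have hK : C ((n + m : ℕ) : ℝ) = C (n : ℝ) + C (m : ℝ) := by simp
  have hd := gen_derivative r n m
  set F := gen r n m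
  have hF : C (1 - p) * derivative F + C p * (C ((n + m : ℕ) : ℝ) * (X * F))
      - C p * (X * (X * derivative F)) - C (1 - p) * (X * derivative F)
      - C p * (C ((n + m : ℕ) : ℝ) * F) + C p * (X * derivative F) = -(C (n : ℝ) * F) := by
    rw [hK]
    linear_combination C (1 - p) * hd + ((C (m : ℝ)) * F * (1 - X)
      - X * (1 - X) * derivative F - C (n : ℝ) * X * F) * (-hqr) - C (n : ℝ) * F * hpq
  have := congrArg (zcoeff x) hF
  simp only [map_add (zcoeff x), map_sub (zcoeff x), map_neg (zcoeff x), zcoeff_C_mul,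
    zcoeff_X_mul, zcoeff_derivative] at this
  push_cast at this ⊢
  simp only [sub_add_cancel] at this
  linear_combination this

/-- A contiguous relation with eigenvalue `K - n`. -/
lemma kraw_three_term {p : ℝ} (hp : 0 < p) (hp' : p < 1) {K n : ℕ} (h : n ≤ K) (x : ℤ) :
    ((x : ℝ) + 1) * (1 - p) * kraw p K n (x + 1) + ((K : ℝ) - x + 1) * p * kraw p K n (x - 1)
      + (x * p + (K - x) * (1 - p)) * kraw p K n x = ((K : ℝ) - n) * kraw p K n x := by
  obtain ⟨m, rfl⟩ := Nat.exists_eq_add_of_le h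
  simp only [kraw_eq_zcoeff hp hp' h, Nat.add_sub_cancel_left]
  set r := p / (1 - p) with hr
  have hqr : C p = C (1 - p) * C r := by
    rw [← C_mul, hr]; congr 1; field_simp [show (1 - p) ≠ 0 by linarith]
  have hpq : C (1 - p) = 1 - C p := by simp
  have hK : C ((n + m : ℕ) : ℝ) = C (n : ℝ) + C (m : ℝ) := by simp
  have hd := gen_derivative r n m
  set F := gen r n m
  have hF : C (1 - p) * derivative F + C p * (C ((n + m : ℕ) : ℝ) * (X * F))
      - C p * (X * (X * derivative F)) + C p * (X * derivative F)
      + C (1 - p) * (C ((n + m : ℕ) : ℝ) * F) - C (1 - p) * (X * derivative F)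
      = C (m : ℝ) * F := by
    rw [hK]
    linear_combination C (1 - p) * hd + (X * (1 - X) * derivative F + C (n : ℝ) * X * F
      + C (m : ℝ) * (X - 1) * F) * hqr + C (m : ℝ) * F * hpq
  have := congrArg (zcoeff x) hF
  simp only [map_add (zcoeff x), map_sub (zcoeff x), zcoeff_C_mul,
    zcoeff_X_mul, zcoeff_derivative] at this
  push_cast at this ⊢
  simp only [sub_add_cancel] at this
  linear_combination this

/-- Lowering of the size parameter from `K + 1` to `K`. For `n = K + 1` the right-hand side
vanishes. -/
lemma kraw_lower {p : ℝ} (hp : 0 < p) (hp' : p < 1) {K n : ℕ} (h : n ≤ K + 1) (x : ℤ) :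
    ((K : ℝ) + 1 - x) * kraw p (K + 1) n x + (x + 1) * kraw p (K + 1) n (x + 1)
      = ((K : ℝ) + 1 - n) / (1 - p) * kraw p K n x := by
  have hq : (1 - p) ≠ 0 := by linarith
  simp only [kraw_eq_zcoeff hp hp' h]
  rcases Nat.lt_or_ge K n with h1 | h1
  · obtain rfl : n = K + 1 := by lia
    have hd := mul_derivative_pow (1 - X) (K + 1)
    have d1 : derivative (1 - X : ℝ[X]) = -1 := by simp
    rw [d1] at hd
    simp only [Nat.sub_self]
    have hF : C ((K + 1 : ℕ) : ℝ) * gen (p / (1 - p)) (K + 1) 0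
        - X * derivative (gen (p / (1 - p)) (K + 1) 0)
        + derivative (gen (p / (1 - p)) (K + 1) 0) = 0 := by
      simp only [gen, pow_zero, mul_one]
      linear_combination hd
    have := congrArg (zcoeff x) hF
    simp only [map_add (zcoeff x), map_sub (zcoeff x), map_zero, zcoeff_C_mul, zcoeff_X_mul_derivative,
      zcoeff_derivative] at this
    push_cast at this ⊢
    linear_combination this
  · obtain ⟨m, rfl⟩ := Nat.exists_eq_add_of_le h1
    simp only [kraw_eq_zcoeff hp hp' h1, Nat.add_sub_cancel_left,
      show n + m + 1 - n = m + 1 by lia]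
    set r := p / (1 - p) with hr
    have hr1 : 1 + r = 1 / (1 - p) := by rw [hr]; field_simp; ring
    have hd := gen_derivative_succ r n m
    have hs := gen_size_succ r n m
    have hF : C ((n : ℝ) + m + 1) * gen r n (m + 1) - X * derivative (gen r n (m + 1))
        + derivative (gen r n (m + 1)) = C (((m : ℝ) + 1) * (1 + r)) * gen r n m := by
      simp only [map_add, map_mul, map_one] at hd ⊢
      linear_combination hd - (C (m : ℝ) + 1) * hs
    have := congrArg (zcoeff x) hF
    simp only [map_add (zcoeff x), map_sub (zcoeff x), zcoeff_C_mul, zcoeff_X_mul_derivative,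
      zcoeff_derivative] at this
    rw [hr1] at this
    push_cast at this ⊢
    linear_combination this

/-! ### The terms of the Griffiths polynomial -/

/-- The `a`-th term of `G^λ_{i,j}(x, y)`, without the factor independent of `x` and `y`. -/
noncomputable def gTerm (p2 p3 : ℝ) (N j a : ℕ) (x y : ℤ) : ℝ :=
  kraw p2 (N - a) j y * kraw p3 (N - y.toNat) a x

/-- Outside `0 ≤ y ≤ N` every term of the sum vanishes, so the case distinction in the definition
of `griffiths` can be dropped. -/
lemma griffiths_eq_sum (lam p1 p2 p3 : ℝ) (N i j : ℕ) (x y : ℤ) :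
    griffiths lam p1 p2 p3 N i j x y = ∑ a ∈ Finset.range (N - j + 1),
      lam ^ a * kraw p1 (N - j) i (a : ℤ) * gTerm p2 p3 N j a x y := by
  unfold griffiths gTerm
  split_ifs with h
  · symm
    refine Finset.sum_eq_zero fun a _ => ?_
    rcases h with h | h
    · rw [kraw_of_neg _ _ _ h]; ring
    · rw [kraw_of_gt _ _ (show ((N - a : ℕ) : ℤ) < y by lia)]; ring
  · exact Finset.sum_congr rfl fun a _ => by ring

/-- The difference relation holds for each term of the sum. -/
lemma gTerm_relation {N j a : ℕ} {p2 p3 : ℝ} (hp2 : 0 < p2) (hp2' : p2 < 1)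
    (hp3 : 0 < p3) (hp3' : p3 < 1) (ha : j + a ≤ N) (x : ℤ) {y : ℤ} (hy : 0 ≤ y)
    (hyN : y ≤ N) :
    -(j : ℝ) * gTerm p2 p3 N j a x y =
      - ((x : ℝ) + 1) * p2 * (1 - p3) * gTerm p2 p3 N j a (x + 1) y
      - ((N : ℝ) - x - y + 1) * p2 * p3 * gTerm p2 p3 N j a (x - 1) y
      + ((y : ℝ) + 1) * (1 - p2) * gTerm p2 p3 N j a x (y + 1)
      + ((N : ℝ) - x - y + 1) * p2 * (1 - p3) * gTerm p2 p3 N j a x (y - 1)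
      + ((x : ℝ) + 1) * p2 * (1 - p3) * gTerm p2 p3 N j a (x + 1) (y - 1)
      + ((y : ℝ) + 1) * (1 - p2) * (p3 / (1 - p3)) * gTerm p2 p3 N j a (x - 1) (y + 1)
      - ((x : ℝ) * p3 * p2 + (y : ℝ) * (1 - p2) + ((N : ℝ) - x - y) * p2 * (1 - p3))
        * gTerm p2 p3 N j a x y := by
  lift y to ℕ using hy
  obtain ⟨K, rfl⟩ : ∃ K, N = y + K := ⟨N - y, by lia⟩
  have hq3 : (1 - p3) ≠ 0 := by linarith
  have haN : ((y + K - a : ℕ) : ℝ) = y + K - a := by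
    rw [Nat.cast_sub (by lia)]; push_cast; ring
  have hD := kraw_diff hp2 hp2' (show j ≤ y + K - a by lia) (y : ℤ)
  -- The three groups of terms, with second argument `y`, `y + 1` and `y - 1`.
  have hA : kraw p2 (y + K - a) j y *
      (((x : ℝ) + 1) * (1 - p3) * kraw p3 K a (x + 1)
        + ((K : ℝ) - x + 1) * p3 * kraw p3 K a (x - 1)
        + (x * p3 + (K - x) * (1 - p3)) * kraw p3 K a x) =
      kraw p2 (y + K - a) j y * (((K : ℝ) - a) * kraw p3 K a x) := by
    rcases Nat.lt_or_ge K a with h | h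
    · rw [kraw_of_gt _ _ (by lia)]; ring
    · rw [kraw_three_term hp3 hp3' h]
  have hB : kraw p2 (y + K - a) j (y + 1) *
      (kraw p3 (K - 1) a x + p3 / (1 - p3) * kraw p3 (K - 1) a (x - 1)) =
      kraw p2 (y + K - a) j (y + 1) * kraw p3 K a x := by
    rcases Nat.lt_or_ge a K with h | h
    · rw [kraw_size_succ hp3 hp3' (by lia), show K - 1 + 1 = K by lia]
    · rw [kraw_of_gt _ _ (by lia)]; ring
  have hC : kraw p2 (y + K - a) j (y - 1) *
      (((K : ℝ) + 1 - x) * kraw p3 (K + 1) a x + (x + 1) * kraw p3 (K + 1) a (x + 1)) =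
      kraw p2 (y + K - a) j (y - 1) * (((K : ℝ) + 1 - a) / (1 - p3) * kraw p3 K a x) := by
    rcases Nat.lt_or_ge (K + 1) a with h | h
    · rw [kraw_of_gt _ _ (by lia)]; ring
    · rw [kraw_lower hp3 hp3' h]
  have t1 (u : ℤ) : gTerm p2 p3 (y + K) j a u y = kraw p2 (y + K - a) j y * kraw p3 K a u := by
    simp [gTerm]
  have t2 (u : ℤ) : gTerm p2 p3 (y + K) j a u (y + 1) =
      kraw p2 (y + K - a) j (y + 1) * kraw p3 (K - 1) a u := by
    rw [gTerm, show y + K - ((y : ℤ) + 1).toNat = K - 1 by lia]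
  have t3 (u : ℤ) : gTerm p2 p3 (y + K) j a u (y - 1) =
      kraw p2 (y + K - a) j (y - 1) * kraw p3 (K + 1) a u := by
    -- At `y = 0` the truncated size parameter is irrelevant, since the first factor vanishes.
    rcases Nat.eq_zero_or_pos y with rfl | h
    · rw [gTerm, kraw_of_neg _ _ _ (by simp)]; ring
    · rw [gTerm, show y + K - ((y : ℤ) - 1).toNat = K + 1 by lia]
  have hC' : (1 - p3) * (kraw p2 (y + K - a) j (y - 1) *
      (((K : ℝ) + 1 - x) * kraw p3 (K + 1) a x + (x + 1) * kraw p3 (K + 1) a (x + 1))) =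
      kraw p2 (y + K - a) j (y - 1) * (((K : ℝ) + 1 - a) * kraw p3 K a x) := by
    rw [hC]; field_simp
  rw [haN] at hD
  simp only [t1, t2, t3]
  push_cast at hD ⊢
  linear_combination (-kraw p3 K a x) * hD + p2 * hA - (y + 1) * (1 - p2) * hB - p2 * hC'

/-- Difference relation (second) for the `λ`-Griffiths polynomials. -/
theorem griffiths_difference_j (N : ℕ) (p1 p2 p3 : ℝ)
    (hp1 : 0 < p1) (hp1' : p1 < 1) (hp2 : 0 < p2) (hp2' : p2 < 1)
    (hp3 : 0 < p3) (hp3' : p3 < 1) (lam : ℝ)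
    (i j : ℕ) (hij : i + j ≤ N)
    (x y : ℤ) (hx : 0 ≤ x) (hy : 0 ≤ y) (hxy : x + y ≤ (N : ℤ)) :
    -(j : ℝ) * griffiths lam p1 p2 p3 N i j x y =
      - ((x : ℝ) + 1) * p2 * (1 - p3) * griffiths lam p1 p2 p3 N i j (x + 1) y
      - ((N : ℝ) - x - y + 1) * p2 * p3 * griffiths lam p1 p2 p3 N i j (x - 1) y
      + ((y : ℝ) + 1) * (1 - p2) * griffiths lam p1 p2 p3 N i j x (y + 1)
      + ((N : ℝ) - x - y + 1) * p2 * (1 - p3) * griffiths lam p1 p2 p3 N i j x (y - 1)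
      + ((x : ℝ) + 1) * p2 * (1 - p3) * griffiths lam p1 p2 p3 N i j (x + 1) (y - 1)
      + ((y : ℝ) + 1) * (1 - p2) * (p3 / (1 - p3))
        * griffiths lam p1 p2 p3 N i j (x - 1) (y + 1)
      - ((x : ℝ) * p3 * p2 + (y : ℝ) * (1 - p2) + ((N : ℝ) - x - y) * p2 * (1 - p3))
        * griffiths lam p1 p2 p3 N i j x y := by
  have ht (a : ℕ) (ha : a ∈ Finset.range (N - j + 1)) :=
    gTerm_relation (j := j) hp2 hp2' hp3 hp3'
      (show j + a ≤ N by simp only [Finset.mem_range] at ha; lia) x hy (by lia)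
  simp only [griffiths_eq_sum, Finset.mul_sum, ← Finset.sum_add_distrib, ← Finset.sum_sub_distrib]
  refine Finset.sum_congr rfl fun a ha => ?_
  linear_combination lam ^ a * kraw p1 (N - j) i (a : ℤ) * ht a ha
end

section
/- Let N be a natural number and p a real with 0 < p < 1. Then for all natural numbers n, x with n ≤ N and x ≤ N, the Krawtchouk polynomials satisfy the contiguity recurrence relation k_n(x;p,N) = p · k_{n+1}(x;p,N+1) + (1−p) · k_n(x;p,N+1). -/
open Polynomial in
/-- The polynomial `(1 + X)^(N-n) (1 + X - X/p)^n`, which generates the Krawtchouk polynomials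
`k_n(x; p, N)`, `n ≤ N`, up to the factor `(p/(1-p))^x`. -/
noncomputable def krawGen (p : ℝ) (N n : ℕ) : ℝ[X] :=
  (1 + X) ^ (N - n) * (C (-p⁻¹) * X + (1 + X)) ^ n

theorem choose_mul_choose_mul_factorial {N x m : ℕ} (hx : x ≤ N) (hm : m ≤ x) :
    (N.choose x : ℝ) * (x.choose m : ℝ) * (m.factorial : ℝ) *
      ((N - m).factorial / (N.factorial : ℝ)) = ((N - m).choose (x - m) : ℝ) := by
  have h : (N.choose x : ℝ) * (x.choose m : ℝ) = N.choose m * (N - m).choose (x - m) := by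
    exact_mod_cast Nat.choose_mul (n := N) (k := x) (s := m) hm
  have h' : (N.choose m : ℝ) * m.factorial * (N - m).factorial = N.factorial := by
    exact_mod_cast Nat.choose_mul_factorial_mul_factorial (hm.trans hx)
  have h0 : (N.factorial : ℝ) ≠ 0 := by positivity
  rw [h]
  field_simp
  linear_combination ((N - m).choose (x - m) : ℝ) * h'

open Polynomial in
theorem krawGen_coeff (p : ℝ) {N n : ℕ} (x : ℕ) (hn : n ≤ N) :
    (krawGen p N n).coeff x = ∑ m ∈ Finset.range (n + 1),
      if m ≤ x then (-p⁻¹) ^ m * (n.choose m : ℝ) * ((N - m).choose (x - m) : ℝ) else 0 := by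
  rw [krawGen, add_pow (C (-p⁻¹) * X), Finset.mul_sum, finsetSum_coeff]
  refine Finset.sum_congr rfl fun m hm => ?_
  have hm' : m ≤ n := by simpa [Nat.lt_succ_iff] using hm
  have e : (1 + X : ℝ[X]) ^ (N - n) *
      ((C (-p⁻¹) * X) ^ m * (1 + X) ^ (n - m) * (n.choose m : ℝ[X])) =
      C ((-p⁻¹) ^ m * (n.choose m : ℝ)) * (X ^ m * (1 + X) ^ (N - m)) := by
    rw [show N - m = (N - n) + (n - m) by omega, pow_add, mul_pow, C_mul, C_pow, C_eq_natCast]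
    ring
  rw [e, coeff_C_mul, coeff_X_pow_mul', coeff_one_add_X_pow]
  split_ifs <;> simp

theorem kraw_eq_coeff (p : ℝ) {N n x : ℕ} (hn : n ≤ N) (hx : x ≤ N) :
    kraw p N n (x : ℤ) = (p / (1 - p)) ^ x * (krawGen p N n).coeff x := by
  have h0 : ¬ ((x : ℤ) < 0) := by omega
  rw [kraw, if_neg h0, krawGen_coeff p x hn, Int.toNat_natCast, zpow_natCast, mul_assoc,
    Finset.mul_sum, ← Finset.sum_filter]
  congr 1
  have hs : (Finset.range (n + 1)).filter (· ≤ x) = Finset.range (min n x + 1) := by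
    ext m
    simp only [Finset.mem_filter, Finset.mem_range]
    omega
  rw [hs]
  refine Finset.sum_congr rfl fun m hm => ?_
  have hm' : m ≤ x := by
    rw [Finset.mem_range] at hm
    omega
  rw [← choose_mul_choose_mul_factorial hx hm', zpow_neg, zpow_natCast, neg_pow p⁻¹, inv_pow]
  ring

open Polynomial in
theorem krawGen_rec {p : ℝ} (hp : p ≠ 0) {N n : ℕ} (hn : n ≤ N) :
    krawGen p N n = C p * krawGen p (N + 1) (n + 1) + C (1 - p) * krawGen p (N + 1) n := by
  have h : (C p * C (-p⁻¹) : ℝ[X]) = -1 := by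
    rw [← C_mul, mul_neg, mul_inv_cancel₀ hp, C_neg, C_1]
  rw [krawGen, krawGen, krawGen, Nat.add_sub_add_right, Nat.succ_sub hn, pow_succ, pow_succ,
    C_sub, C_1]
  linear_combination
    -((1 + X) ^ (N - n) * (C (-p⁻¹) * X + (1 + X)) ^ n * X) * h

/-- Contiguity recurrence relation (II) for the Krawtchouk polynomials. -/
theorem kraw_contiguity_recurrence_II (N : ℕ) (p : ℝ)
    (hp : 0 < p) (hp' : p < 1) (n x : ℕ) (hn : n ≤ N) (hx : x ≤ N) :
    kraw p N n (x : ℤ) =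
      p * kraw p (N + 1) (n + 1) (x : ℤ) + (1 - p) * kraw p (N + 1) n (x : ℤ) := by
  rw [kraw_eq_coeff p hn hx, kraw_eq_coeff p (by omega) (by omega),
    kraw_eq_coeff p (by omega) (by omega), krawGen_rec hp.ne' hn, Polynomial.coeff_add,
    Polynomial.coeff_C_mul, Polynomial.coeff_C_mul]
  ring
end
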